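/- Let G be a finite connected simple graph and let f be a first kind semi-arithmetic IASI of G that is l-uniform for some positive integer l, i.e., |f(u) + f(v)| = l for every edge uv. Then either all vertices of G have the same set-indexing number (V(G) is uniformly set-indexed), or G is bipartite. -/

import Mathlib

open Finset Pointwise

/-!
If the difference of one progression is `k` times that of the other and `k` exceeds the length of
the latter, every element of the sumset has a unique representation (uniqueness of base-`k`
expansions), so `|f u + f v| = |f u| * |f v|` on each edge. Uniformity then gives
`|f u| * |f v| = l` on edges, so along walks from a fixed vertex `w` the cardinality alternates
between `p = |f w|` and `l / p`. If `p * p = l` all cardinalities agree; otherwise the set of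
vertices of cardinality `p` is one side of a bipartition.
-/

lemma card_ap (a d m : ℕ) (hd : 0 < d) :
    ((range m).image (fun r => a + r * d)).card = m := by
  rw [card_image_of_injective, card_range]
  intro r s h
  exact Nat.eq_of_mul_eq_mul_right hd (Nat.add_left_cancel h)

/-- The bound `m < k` makes `r` the remainder and `s` the quotient of `r + s * k` by `k`. -/
lemma card_ap_add_ap (a b d m n k : ℕ) (hd : 0 < d) (hk : m < k) :
    ((range m).image (fun r => a + r * d) + (range n).image (fun s => b + s * (k * d))).card
      = m * n := by
  have key : ((range m).image (fun r => a + r * d) +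
      (range n).image (fun s => b + s * (k * d))).card =
      ((range m).image (fun r => a + r * d)).card *
      ((range n).image (fun s => b + s * (k * d))).card := by
    rw [Finset.card_add_iff]
    rintro ⟨x, y⟩ hx ⟨x', y'⟩ hx' h
    simp only [Set.mem_prod, coe_image, Set.mem_image, coe_range, Set.mem_Iio] at hx hx'
    obtain ⟨⟨r, hr, rfl⟩, s, -, rfl⟩ := hx
    obtain ⟨⟨r', hr', rfl⟩, s', -, rfl⟩ := hx'
    have h1 : r + k * s = r' + k * s' := by
      apply Nat.eq_of_mul_eq_mul_right hd
      dsimp only at h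
      linarith
    have h2 : r = r' := by
      have := congrArg (· % k) h1
      simpa [Nat.mod_eq_of_lt (hr.trans hk), Nat.mod_eq_of_lt (hr'.trans hk)] using this
    subst h2
    have h3 : s = s' := Nat.eq_of_mul_eq_mul_left (by omega) (Nat.add_left_cancel h1)
    rw [h3]
  rw [key, card_ap _ _ _ hd, card_ap _ _ _ (Nat.mul_pos (by omega) hd)]

/-- **Theorem (uniform first kind semi-arithmetic IASIs; necessity).**
Let `f` be a first kind semi-arithmetic IASI of a finite connected simple
graph `G` which is `l`-uniform for some positive integer `l`, i.e.
`|f u + f v| = l` for every edge `uv`.  Then either all vertices have the same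
set-indexing number (the vertex set is uniformly set-indexed), or `G` is
bipartite (its vertex set splits into two parts with every edge joining the
two parts). -/
theorem uniform_firstKindSemiArithmetic_bipartite_or_uniformlySetIndexed
    {V : Type*} [Fintype V] (G : SimpleGraph V) (hconn : G.Connected)
    (f : V → Finset ℕ) (a d m : V → ℕ)
    (hd : ∀ v, 0 < d v) (hm : ∀ v, 3 ≤ m v)
    (hf : ∀ v, f v = (range (m v)).image (fun r => a v + r * d v))
    (hinj : Function.Injective f)
    (hedge : ∀ u v x y, G.Adj u v → G.Adj x y →
      f u + f v = f x + f y → s(u, v) = s(x, y))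
    (hfirst : ∀ u v, G.Adj u v → ∃ k : ℕ,
      (d v = k * d u ∧ (f u).card < k) ∨ (d u = k * d v ∧ (f v).card < k))
    (l : ℕ) (hl : 0 < l)
    (hunif : ∀ u v, G.Adj u v → (f u + f v).card = l) :
    (∀ u v, (f u).card = (f v).card) ∨
      (∃ X : Set V, ∀ u v, G.Adj u v → (u ∈ X ↔ v ∉ X)) := by
  have hc : ∀ v, (f v).card = m v := fun v => by rw [hf v, card_ap _ _ _ (hd v)]
  have hmul : ∀ u v, G.Adj u v → m u * m v = l := by
    intro u v h
    rw [← hunif u v h]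
    obtain ⟨k, ⟨h1, h2⟩ | ⟨h1, h2⟩⟩ := hfirst u v h
    · rw [hc] at h2
      rw [hf u, hf v, h1, card_ap_add_ap _ _ _ _ _ _ (hd u) h2]
    · rw [hc] at h2
      rw [add_comm, hf u, hf v, h1, card_ap_add_ap _ _ _ _ _ _ (hd v) h2, mul_comm]
  have hpos : ∀ v, 0 < m v := fun v => by have := hm v; omega
  obtain ⟨w⟩ := hconn.nonempty
  have hdich : ∀ v, m v = m w ∨ m v * m w = l := by
    intro v
    obtain ⟨p⟩ := hconn.preconnected v w
    induction p with
    | nil => exact Or.inl rfl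
    | @cons x y z h p ih =>
      have hxy := hmul x y h
      rcases ih with ih | ih
      · right
        rw [← ih, hxy]
      · left
        refine Nat.eq_of_mul_eq_mul_right (hpos y) ?_
        rw [hxy, ← ih, mul_comm]
  by_cases hp : m w * m w = l
  · left
    have hall : ∀ v, m v = m w := fun v => (hdich v).elim id fun h =>
      Nat.eq_of_mul_eq_mul_right (hpos w) (h.trans hp.symm)
    intro u v
    rw [hc, hc, hall u, hall v]
  · right
    refine ⟨{v | m v = m w}, fun u v h => ?_⟩
    have huv := hmul u v h
    simp only [Set.mem_ofPred_eq]
    constructor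
    · intro hu hv
      exact hp (by rw [← huv, hu, hv])
    · intro hv
      refine Nat.eq_of_mul_eq_mul_right (hpos v) ?_
      rw [huv, ← (hdich v).resolve_left hv, mul_comm]
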